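/- In the transverse p-spin model with p ≥ 2, for every N ≥ p, β > 0, J > 0 and b ≥ 0, setting α_p(N) = N!/((N−p)!·N^p), the disorder mean of the Gibbs expectation of the p-th power of the replica-overlap operator satisfies 0 ≤ E[⟨R_N^p⟩⊗] − α_p(N) · E[⟨S_1^z S_2^z ⋯ S_p^z⟩²] ≤ 1 − α_p(N). -/

import Mathlib

open Matrix MeasureTheory ProbabilityTheory
open scoped Kronecker

noncomputable section

abbrev Conf (N : ℕ) := Fin N → Fin 2

def Sz (N : ℕ) (j : Fin N) : Matrix (Conf N) (Conf N) ℂ :=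
  Matrix.diagonal fun σ => if σ j = 0 then 1 else -1

def Sx (N : ℕ) (j : Fin N) : Matrix (Conf N) (Conf N) ℂ :=
  Matrix.of fun σ τ => if τ = Function.update σ j (1 - σ j) then 1 else 0

/-- The product `S^z_{j_1} S^z_{j_2} ⋯ S^z_{j_p}` over an index set `s`. -/
def SzProd (N : ℕ) (s : Finset (Fin N)) : Matrix (Conf N) (Conf N) ℂ :=
  Matrix.diagonal fun σ => ∏ j ∈ s, (if σ j = 0 then (1 : ℂ) else -1)

/-- The zero-field `p`-spin Hamiltonian
`U_N = −√(p!/(2N^{p−1})) Σ_{j_1<⋯<j_p} g_{j_1⋯j_p} S^z_{j_1} ⋯ S^z_{j_p}`. -/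
def UNp (N p : ℕ) (g : Finset (Fin N) → ℝ) : Matrix (Conf N) (Conf N) ℂ :=
  (-(Real.sqrt ((Nat.factorial p : ℝ) / (2 * (N : ℝ) ^ (p - 1))))) •
    ∑ s : Finset (Fin N), if s.card = p then g s • SzProd N s else 0

/-- The transverse `p`-spin Hamiltonian `H_N = J·U_N − b·Σ_j S_j^x`. -/
def HNp (N p : ℕ) (J b : ℝ) (g : Finset (Fin N) → ℝ) : Matrix (Conf N) (Conf N) ℂ :=
  J • UNp N p g - b • ∑ j : Fin N, Sx N j

/-- Gibbs expectation (real part of the trace ratio). -/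
def gibbs {n : Type*} [Fintype n] [DecidableEq n] (β : ℝ) (H A : Matrix n n ℂ) : ℝ :=
  ((NormedSpace.exp ((-β) • H) * A).trace / (NormedSpace.exp ((-β) • H)).trace).re

/-- The replica-overlap operator `R_N = N⁻¹ Σ_j S_j^z ⊗ S_j^z` on `ℋ_N ⊗ ℋ_N`. -/
def RN (N : ℕ) : Matrix (Conf N × Conf N) (Conf N × Conf N) ℂ :=
  ((N : ℝ)⁻¹) • ∑ j : Fin N, (Sz N j) ⊗ₖ (Sz N j)

/-- The duplicated Hamiltonian `H_N ⊗ 1 + 1 ⊗ H_N`. -/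
def Hdup (N p : ℕ) (J b : ℝ) (g : Finset (Fin N) → ℝ) :
    Matrix (Conf N × Conf N) (Conf N × Conf N) ℂ :=
  (HNp N p J b g) ⊗ₖ (1 : Matrix (Conf N) (Conf N) ℂ)
    + (1 : Matrix (Conf N) (Conf N) ℂ) ⊗ₖ (HNp N p J b g)

/-- `α_p(N) = N!/((N−p)!·N^p)`. -/
def alphaP (N p : ℕ) : ℝ :=
  (Nat.factorial N : ℝ) / ((Nat.factorial (N - p) : ℝ) * (N : ℝ) ^ p)

/-- The index set `{1, …, p}` of the first `p` spins. -/
def firstP (N p : ℕ) : Finset (Fin N) := Finset.univ.filter fun j : Fin N => (j : ℕ) < p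

/-!
Expanding `R_N ^ p` over all index maps `f : Fin p → Fin N` gives the average of `S_f ⊗ S_f`, where
`S_f = ∏ i, S^z_{f i}`, and the duplicated Gibbs state factorises on tensor products. Hence
`E⟨R_N^p⟩` is the average over `f` of `E[⟨S_f⟩²]`. Only the invariance of the disorder under
relabelling the sites matters: it makes all injective `f` contribute the same value
`E[⟨S_1^z ⋯ S_p^z⟩²]`, and their proportion is `α_p(N)`. The other `f` have total weight
`1 - α_p(N)` and contribute values in `[0, 1]`.
-/

lemma isSelfAdjoint_trace_mul {R n : Type*} [CommRing R] [StarRing R] [Fintype n]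
    {A B : Matrix n n R} (hA : A.IsHermitian) (hB : B.IsHermitian) :
    IsSelfAdjoint (A * B).trace := by
  rw [IsSelfAdjoint, ← trace_conjTranspose, conjTranspose_mul, hA.eq, hB.eq, trace_mul_comm]

section MatrixExponential

open scoped ComplexOrder

variable {𝕜 m n : Type*} [RCLike 𝕜] [Fintype m] [DecidableEq m] [Fintype n] [DecidableEq n]

lemma continuous_matrix_exp : Continuous (NormedSpace.exp : Matrix n n 𝕜 → Matrix n n 𝕜) :=
  open scoped Norms.Operator in NormedSpace.exp_continuous

lemma exp_submatrix_equiv (e : m ≃ n) (A : Matrix n n 𝕜) :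
    NormedSpace.exp (A.submatrix e e) = (NormedSpace.exp A).submatrix e e :=
  open scoped Norms.Operator in
  (NormedSpace.map_exp (reindexAlgEquiv 𝕜 𝕜 e.symm)
    (continuous_id.matrix_submatrix e e) A).symm

lemma exp_kronecker_one (A : Matrix m m 𝕜) :
    NormedSpace.exp (A ⊗ₖ (1 : Matrix n n 𝕜)) = NormedSpace.exp A ⊗ₖ (1 : Matrix n n 𝕜) := by
  have hcont : Continuous fun A : Matrix m m 𝕜 => blockDiagonal fun _ : n => A :=
    Continuous.matrix_blockDiagonal (continuous_pi fun _ => continuous_id)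
  rw [kronecker_one, kronecker_one]
  exact open scoped Norms.Operator in
    (NormedSpace.map_exp ((blockDiagonalRingHom m n 𝕜).comp (Pi.constRingHom n _)) hcont A).symm

lemma exp_one_kronecker (B : Matrix n n 𝕜) :
    NormedSpace.exp ((1 : Matrix m m 𝕜) ⊗ₖ B) = (1 : Matrix m m 𝕜) ⊗ₖ NormedSpace.exp B := by
  have hswap (C : Matrix n n 𝕜) : (1 : Matrix m m 𝕜) ⊗ₖ C =
      (C ⊗ₖ (1 : Matrix m m 𝕜)).submatrix (Equiv.prodComm m n) (Equiv.prodComm m n) := by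
    ext
    exact mul_comm _ _
  rw [hswap, hswap, exp_submatrix_equiv, exp_kronecker_one]

lemma exp_kronecker_one_add_one_kronecker (A : Matrix m m 𝕜) (B : Matrix n n 𝕜) :
    NormedSpace.exp (A ⊗ₖ (1 : Matrix n n 𝕜) + (1 : Matrix m m 𝕜) ⊗ₖ B) =
      NormedSpace.exp A ⊗ₖ NormedSpace.exp B := by
  have hcomm : Commute (A ⊗ₖ (1 : Matrix n n 𝕜)) ((1 : Matrix m m 𝕜) ⊗ₖ B) := by
    simp only [Commute, SemiconjBy, ← mul_kronecker_mul, mul_one, one_mul]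
  rw [Matrix.exp_add_of_commute _ _ hcomm, exp_kronecker_one, exp_one_kronecker,
    ← mul_kronecker_mul, mul_one, one_mul]

lemma trace_exp_mul_nonneg {A B : Matrix n n 𝕜} (hA : A.IsHermitian) (hB : B.PosSemidef) :
    0 ≤ (NormedSpace.exp A * B).trace := by
  set X := NormedSpace.exp ((2⁻¹ : ℝ) • A)
  have hX : Xᴴ = X := (hA.smul (IsSelfAdjoint.all (2⁻¹ : ℝ))).exp
  have hexp : NormedSpace.exp A = Xᴴ * X := by
    rw [hX, ← Matrix.exp_add_of_commute _ _ (Commute.refl _), ← add_smul]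
    norm_num
  rw [hexp, Matrix.mul_assoc, trace_mul_comm]
  exact (hB.mul_mul_conjTranspose_same X).trace_nonneg

end MatrixExponential

section Gibbs

open scoped ComplexOrder

variable {m n ι : Type*} [Fintype m] [DecidableEq m] [Fintype n] [DecidableEq n]
  (β : ℝ) {H A : Matrix n n ℂ}

lemma gibbs_add (H A B : Matrix n n ℂ) : gibbs β H (A + B) = gibbs β H A + gibbs β H B := by
  simp only [gibbs, mul_add, trace_add, add_div, Complex.add_re]

lemma gibbs_sub (H A B : Matrix n n ℂ) : gibbs β H (A - B) = gibbs β H A - gibbs β H B := by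
  simp only [gibbs, mul_sub, trace_sub, sub_div, Complex.sub_re]

lemma gibbs_smul (H : Matrix n n ℂ) (c : ℝ) (A : Matrix n n ℂ) :
    gibbs β H (c • A) = c * gibbs β H A := by
  rw [gibbs, Matrix.mul_smul, trace_smul, smul_div_assoc, Complex.smul_re, smul_eq_mul, gibbs]

lemma gibbs_sum (H : Matrix n n ℂ) (s : Finset ι) (A : ι → Matrix n n ℂ) :
    gibbs β H (∑ i ∈ s, A i) = ∑ i ∈ s, gibbs β H (A i) := by
  simp only [gibbs, Finset.mul_sum, trace_sum, Finset.sum_div, Complex.re_sum]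

lemma gibbs_one_le_one (H : Matrix n n ℂ) : gibbs β H 1 ≤ 1 := by
  rw [gibbs, mul_one]
  by_cases hZ : (NormedSpace.exp ((-β) • H)).trace = 0
  · rw [hZ, div_zero]
    exact zero_le_one
  · rw [div_self hZ, Complex.one_re]

lemma gibbs_nonneg (hH : H.IsHermitian) (hA : A.PosSemidef) : 0 ≤ gibbs β H A := by
  have hβH := hH.smul (IsSelfAdjoint.all (-β))
  have hZ := trace_exp_mul_nonneg hβH PosSemidef.one
  rw [mul_one] at hZ
  exact (Complex.nonneg_iff.1 (div_nonneg (trace_exp_mul_nonneg hβH hA) hZ)).1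

lemma abs_gibbs_le_one (hH : H.IsHermitian) (hsub : (1 - A).PosSemidef)
    (hadd : (1 + A).PosSemidef) : |gibbs β H A| ≤ 1 := by
  have hone := gibbs_one_le_one β H
  have hsub' := gibbs_nonneg β hH hsub
  have hadd' := gibbs_nonneg β hH hadd
  rw [gibbs_sub] at hsub'
  rw [gibbs_add] at hadd'
  exact abs_le.2 ⟨by linarith, by linarith⟩

lemma ofReal_gibbs (hH : H.IsHermitian) (hA : A.IsHermitian) :
    (gibbs β H A : ℂ) =
      (NormedSpace.exp ((-β) • H) * A).trace / (NormedSpace.exp ((-β) • H)).trace := by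
  have hexp := (hH.smul (IsSelfAdjoint.all (-β))).exp
  have hZ := isSelfAdjoint_trace_mul hexp isHermitian_one
  rw [mul_one] at hZ
  exact Complex.conj_eq_iff_re.1 ((isSelfAdjoint_trace_mul hexp hA).div hZ)

lemma gibbs_kronecker (hH : H.IsHermitian) (hA : A.IsHermitian) (K B : Matrix m m ℂ) :
    gibbs β (H ⊗ₖ (1 : Matrix m m ℂ) + (1 : Matrix n n ℂ) ⊗ₖ K) (A ⊗ₖ B) =
      gibbs β H A * gibbs β K B := by
  rw [gibbs, smul_add, ← smul_kronecker, ← kronecker_smul, exp_kronecker_one_add_one_kronecker,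
    ← mul_kronecker_mul, trace_kronecker, trace_kronecker, mul_div_mul_comm,
    ← ofReal_gibbs β hH hA, Complex.re_ofReal_mul, ← gibbs]

lemma gibbs_submatrix_equiv (e : m ≃ n) (H A : Matrix n n ℂ) :
    gibbs β (H.submatrix e e) (A.submatrix e e) = gibbs β H A := by
  have htrace (B : Matrix n n ℂ) : (B.submatrix e e).trace = B.trace := e.sum_comp (B.diag)
  have hsmul : (-β) • H.submatrix e e = ((-β) • H).submatrix e e := rfl
  rw [gibbs, gibbs, hsmul, exp_submatrix_equiv, submatrix_mul_equiv, htrace, htrace]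

lemma measurable_gibbs (A : Matrix n n ℂ) :
    Measurable fun H : n → n → ℂ => gibbs β (of H) A := by
  have hexp : Continuous fun H : n → n → ℂ => NormedSpace.exp ((-β) • of H) :=
    continuous_matrix_exp.comp (Continuous.const_smul continuous_id (-β))
  exact Complex.measurable_re.comp
    ((hexp.matrix_mul continuous_const).matrix_trace.measurable.div hexp.matrix_trace.measurable)

end Gibbs

lemma prod_ite_one_neg_one_eq_one_or {ι M : Type*} [CommRing M] (s : Finset ι) (P : ι → Prop)
    [DecidablePred P] :
    ∏ i ∈ s, (if P i then (1 : M) else -1) = 1 ∨ ∏ i ∈ s, (if P i then (1 : M) else -1) = -1 := by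
  refine Finset.prod_induction _ (fun x : M => x = 1 ∨ x = -1) ?_ (.inl rfl) fun i _ => ?_
  · rintro _ _ (rfl | rfl) (rfl | rfl) <;> simp
  · split_ifs <;> simp

section SpinMonomial

open scoped ComplexOrder

variable {ι : Type*} [Fintype ι] {N : ℕ}

/-- The product `∏ i, S^z_{f i}`, in which a site counts with its multiplicity in the family `f`
(whereas `SzProd` runs over a set of sites). -/
def spinMonomial (f : ι → Fin N) : Matrix (Conf N) (Conf N) ℂ :=
  diagonal fun σ => ∏ i, if σ (f i) = 0 then 1 else -1

lemma spinMonomial_coe (s : Finset (Fin N)) : spinMonomial ((↑) : s → Fin N) = SzProd N s := by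
  simp only [spinMonomial, SzProd, ← Finset.prod_coe_sort s]

lemma SzProd_map (f : ι ↪ Fin N) : SzProd N (Finset.univ.map f) = spinMonomial f := by
  simp only [SzProd, spinMonomial, Finset.prod_map]

lemma spinMonomial_isHermitian (f : ι → Fin N) : (spinMonomial f).IsHermitian := by
  refine isHermitian_diagonal_of_self_adjoint _ (funext fun σ => ?_)
  rcases prod_ite_one_neg_one_eq_one_or (M := ℂ) Finset.univ fun i => σ (f i) = 0 with h | h <;>
    simp [h]

lemma abs_gibbs_spinMonomial_le_one (β : ℝ) {H : Matrix (Conf N) (Conf N) ℂ}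
    (hH : H.IsHermitian) (f : ι → Fin N) : |gibbs β H (spinMonomial f)| ≤ 1 := by
  have hsign (σ : Conf N) :=
    prod_ite_one_neg_one_eq_one_or (M := ℂ) Finset.univ fun i => σ (f i) = 0
  refine abs_gibbs_le_one β hH ?_ ?_
  · rw [spinMonomial, ← diagonal_one, diagonal_sub]
    refine PosSemidef.diagonal fun σ => ?_
    rcases hsign σ with h | h <;> simp [h, one_add_one_eq_two]
  · rw [spinMonomial, ← diagonal_one, diagonal_add]
    refine PosSemidef.diagonal fun σ => ?_
    rcases hsign σ with h | h <;> simp [h, one_add_one_eq_two]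

lemma RN_pow (N p : ℕ) :
    RN N ^ p = ((N : ℝ) ^ p)⁻¹ • ∑ f : Fin p → Fin N, spinMonomial f ⊗ₖ spinMonomial f := by
  let overlap (j : Fin N) (x : Conf N × Conf N) : ℂ :=
    (if x.1 j = 0 then 1 else -1) * (if x.2 j = 0 then 1 else -1)
  let diag := diagonalRingHom (Conf N × Conf N) ℂ
  have hSz (j : Fin N) : Sz N j ⊗ₖ Sz N j = diag (overlap j) :=
    diagonal_kronecker_diagonal _ _
  have hmonomial (f : Fin p → Fin N) :
      spinMonomial f ⊗ₖ spinMonomial f = diag (∏ i, overlap (f i)) := by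
    rw [spinMonomial, diagonal_kronecker_diagonal]
    refine congrArg diagonal (funext fun x => ?_)
    rw [Finset.prod_apply, Finset.prod_mul_distrib]
  simp only [RN, hSz, hmonomial, smul_pow, inv_pow, ← map_sum, ← map_pow, Fintype.sum_pow]

end SpinMonomial

section Average

open scoped BigOperators

lemma expect_sub_dens_mul_mem_Icc {ι K : Type*} [Fintype ι] [Field K] [LinearOrder K]
    [IsStrictOrderedRing K] {s : Finset ι} {x : ι → K} {c : K} (hs : ∀ i ∈ s, x i = c)
    (hx : ∀ i, x i ∈ Set.Icc 0 1) :
    (𝔼 i, x i) - s.dens * c ∈ Set.Icc 0 (1 - (s.dens : K)) := by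
  classical
  have hdiff : (𝔼 i, x i) - s.dens * c = (∑ i ∈ sᶜ, x i) / Fintype.card ι := by
    rw [Fintype.expect_eq_sum_div_card, ← s.sum_add_sum_compl, Finset.sum_congr rfl hs,
      Finset.sum_const, nsmul_eq_mul, Finset.nnratCast_dens]
    ring
  have hcompl : (sᶜ.card : K) / Fintype.card ι ≤ 1 - s.dens := by
    rw [Finset.card_compl, Nat.cast_sub s.card_le_univ, sub_div, Finset.nnratCast_dens]
    exact sub_le_sub_right (div_self_le_one _) _
  have hsum : ∑ i ∈ sᶜ, x i ≤ sᶜ.card := by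
    simpa using Finset.sum_le_card_nsmul sᶜ x 1 fun i _ => (hx i).2
  rw [hdiff]
  exact ⟨div_nonneg (Finset.sum_nonneg fun i _ => (hx i).1) (Nat.cast_nonneg _),
    (div_le_div_of_nonneg_right hsum (Nat.cast_nonneg _)).trans hcompl⟩

lemma integral_expect {Ω ι : Type*} [MeasurableSpace Ω] {μ : Measure Ω} [Fintype ι]
    {X : ι → Ω → ℝ} (hX : ∀ i, Integrable (X i) μ) :
    ∫ ω, 𝔼 i, X i ω ∂μ = 𝔼 i, ∫ ω, X i ω ∂μ := by
  simp only [Fintype.expect_eq_sum_div_card]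
  rw [integral_div, integral_finsetSum _ fun i _ => hX i]

end Average

section Overlap

open scoped BigOperators

lemma gibbs_RN_pow (β : ℝ) {N : ℕ} {H : Matrix (Conf N) (Conf N) ℂ} (hH : H.IsHermitian)
    (p : ℕ) :
    gibbs β (H ⊗ₖ (1 : Matrix (Conf N) (Conf N) ℂ) + (1 : Matrix (Conf N) (Conf N) ℂ) ⊗ₖ H)
      (RN N ^ p) = 𝔼 f : Fin p → Fin N, gibbs β H (spinMonomial f) ^ 2 := by
  rw [RN_pow, gibbs_smul, gibbs_sum, Fintype.expect_eq_sum_div_card, Fintype.card_fun,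
    Fintype.card_fin, Fintype.card_fin, Nat.cast_pow, inv_mul_eq_div]
  simp only [gibbs_kronecker β hH (spinMonomial_isHermitian _), sq]

lemma alphaP_eq_dens_injective {N p : ℕ} (hN : p ≤ N) :
    alphaP N p = ((Finset.univ.filter (Function.Injective : (Fin p → Fin N) → Prop)).dens : ℝ) := by
  have hcard : (Finset.univ.filter (Function.Injective : (Fin p → Fin N) → Prop)).card =
      N.descFactorial p := by
    rw [← Fintype.card_subtype, Fintype.card_congr (Equiv.subtypeInjectiveEquivEmbedding _ _),
      Fintype.card_embedding_eq, Fintype.card_fin, Fintype.card_fin]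
  have hfac : ((N - p).factorial : ℝ) ≠ 0 := Nat.cast_ne_zero.2 (Nat.factorial_ne_zero _)
  rw [Finset.nnratCast_dens, hcard, alphaP, ← Nat.factorial_mul_descFactorial hN, Nat.cast_mul,
    mul_div_mul_left _ _ hfac, Fintype.card_fun, Fintype.card_fin, Fintype.card_fin, Nat.cast_pow]

lemma firstP_eq_map_castLEEmb {N p : ℕ} (hN : p ≤ N) :
    firstP N p = Finset.univ.map (Fin.castLEEmb hN) := by
  ext j
  simp only [firstP, Finset.mem_filter, Finset.mem_univ, true_and, Finset.mem_map,
    Fin.coe_castLEEmb]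
  exact ⟨fun hj => ⟨⟨j, hj⟩, rfl⟩, fun ⟨i, hi⟩ => hi ▸ i.isLt⟩

end Overlap

section SitePermutation

variable {ι : Type*} [Fintype ι] {N : ℕ} (π : Equiv.Perm (Fin N))

/-- The action `σ ↦ σ ∘ π` of a permutation of the sites on spin configurations. -/
def permConf : Conf N ≃ Conf N := π.symm.arrowCongr (Equiv.refl (Fin 2))

lemma spinMonomial_submatrix_permConf (f : ι → Fin N) :
    (spinMonomial f).submatrix (permConf π) (permConf π) = spinMonomial (π ∘ f) :=
  submatrix_diagonal _ _ (permConf π).injective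

lemma SzProd_submatrix_permConf (s : Finset (Fin N)) :
    (SzProd N s).submatrix (permConf π) (permConf π) = SzProd N (s.map π.toEmbedding) := by
  rw [SzProd, SzProd, submatrix_diagonal _ _ (permConf π).injective]
  refine congrArg diagonal (funext fun σ => ?_)
  rw [Finset.prod_map]
  rfl

lemma Sx_submatrix_permConf (j : Fin N) :
    (Sx N j).submatrix (permConf π) (permConf π) = Sx N (π j) := by
  ext σ τ
  have hflip : permConf π (Function.update σ (π j) (1 - σ (π j))) =
      Function.update (permConf π σ) j (1 - permConf π σ j) :=
    Function.update_comp_eq_of_injective σ π.injective j _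
  simp only [Sx, submatrix_apply, of_apply, ← hflip, (permConf π).injective.eq_iff]

end SitePermutation

/-- A random matrix on spin configurations is site-exchangeable if its law, as the joint law of its
entries (there is no `MeasurableSpace` instance on `Matrix`), is invariant under relabelling the
sites. -/
def SiteExchangeable {Ω : Type*} [MeasurableSpace Ω] (μ : Measure Ω) {N : ℕ}
    (H : Ω → Matrix (Conf N) (Conf N) ℂ) : Prop :=
  ∀ π : Equiv.Perm (Fin N), IdentDistrib
    (fun ω σ τ => H ω (permConf π σ) (permConf π τ)) (fun ω σ τ => H ω σ τ) μ μ

namespace SiteExchangeable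

variable {Ω ι : Type*} [MeasurableSpace Ω] {μ : Measure Ω} {N : ℕ}
  {H : Ω → Matrix (Conf N) (Conf N) ℂ}

lemma aemeasurable_gibbs (hexch : SiteExchangeable μ H) (β : ℝ)
    (A : Matrix (Conf N) (Conf N) ℂ) : AEMeasurable (fun ω => gibbs β (H ω) A) μ :=
  (measurable_gibbs β A).comp_aemeasurable (hexch 1).aemeasurable_snd

variable [Fintype ι]

lemma identDistrib_gibbs_spinMonomial (hexch : SiteExchangeable μ H) (β : ℝ) {f f' : ι → Fin N}
    (hf : Function.Injective f) (hf' : Function.Injective f') :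
    IdentDistrib (fun ω => gibbs β (H ω) (spinMonomial f))
      (fun ω => gibbs β (H ω) (spinMonomial f')) μ μ := by
  obtain ⟨π, hπ⟩ := Equiv.Perm.exists_extending_pair f f' hf hf'
  have hrelabel (ω : Ω) : gibbs β (H ω) (spinMonomial f) =
      gibbs β ((H ω).submatrix (permConf π) (permConf π)) (spinMonomial f') := by
    rw [← gibbs_submatrix_equiv β (permConf π), spinMonomial_submatrix_permConf,
      show π ∘ f = f' from funext hπ]
  simp only [hrelabel]
  exact (hexch π).comp (measurable_gibbs β (spinMonomial f'))

lemma integrable_sq_gibbs_spinMonomial [IsFiniteMeasure μ] (hexch : SiteExchangeable μ H)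
    (β : ℝ) (hH : ∀ ω, (H ω).IsHermitian) (f : ι → Fin N) :
    Integrable (fun ω => gibbs β (H ω) (spinMonomial f) ^ 2) μ := by
  refine Integrable.of_bound ((hexch.aemeasurable_gibbs β _).pow_const 2).aestronglyMeasurable 1
    (.of_forall fun ω => ?_)
  rw [norm_pow, Real.norm_eq_abs]
  exact pow_le_one₀ (abs_nonneg _) (abs_gibbs_spinMonomial_le_one β (hH ω) f)

lemma integral_sq_gibbs_spinMonomial_mem_Icc [IsProbabilityMeasure μ]
    (hexch : SiteExchangeable μ H) (β : ℝ) (hH : ∀ ω, (H ω).IsHermitian) (f : ι → Fin N) :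
    ∫ ω, gibbs β (H ω) (spinMonomial f) ^ 2 ∂μ ∈ Set.Icc 0 1 := by
  refine ⟨integral_nonneg fun ω => sq_nonneg _, ?_⟩
  have hle := integral_mono (hexch.integrable_sq_gibbs_spinMonomial β hH f)
    (integrable_const (1 : ℝ))
    fun ω => (sq_le_one_iff_abs_le_one _).2 (abs_gibbs_spinMonomial_le_one β (hH ω) f)
  simpa only [integral_const, probReal_univ, one_smul] using hle

end SiteExchangeable

section PSpin

variable {N : ℕ}

lemma Sx_isHermitian (j : Fin N) : (Sx N j).IsHermitian := by
  have hflip (σ τ : Conf N) (h : τ = Function.update σ j (1 - σ j)) :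
      σ = Function.update τ j (1 - τ j) := by
    simp [h]
  ext σ τ
  rw [conjTranspose_apply, Sx, of_apply, of_apply, apply_ite star, star_one, star_zero]
  exact if_congr ⟨hflip τ σ, hflip σ τ⟩ rfl rfl

lemma HNp_isHermitian (p : ℕ) (J b : ℝ) (g : Finset (Fin N) → ℝ) :
    (HNp N p J b g).IsHermitian := by
  have hreal (c : ℝ) := IsSelfAdjoint.all c
  have hSz (s : Finset (Fin N)) : (if s.card = p then g s • SzProd N s else 0).IsHermitian := by
    split_ifs
    · exact (spinMonomial_coe s ▸ spinMonomial_isHermitian _ : (SzProd N s).IsHermitian).smul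
        (hreal _)
    · exact isHermitian_zero
  have hU : (UNp N p g).IsHermitian :=
    IsHermitian.smul (isSelfAdjoint_sum _ fun s _ => hSz s) (hreal _)
  exact (hU.smul (hreal J)).sub
    (IsHermitian.smul (isSelfAdjoint_sum _ fun j _ => Sx_isHermitian j) (hreal b))

lemma continuous_HNp (p : ℕ) (J b : ℝ) :
    Continuous fun g : Finset (Fin N) → ℝ => HNp N p J b g := by
  have hterm (s : Finset (Fin N)) : Continuous fun g : Finset (Fin N) → ℝ =>
      if s.card = p then g s • SzProd N s else 0 := by
    split_ifs
    · exact (continuous_apply s).smul continuous_const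
    · exact continuous_const
  have hU : Continuous fun g : Finset (Fin N) → ℝ => UNp N p g :=
    Continuous.fun_const_smul (continuous_finsetSum _ fun s _ => hterm s) _
  exact (hU.const_smul J).sub continuous_const

lemma HNp_congr {p : ℕ} (J b : ℝ) {g g' : Finset (Fin N) → ℝ}
    (h : ∀ s, s.card = p → g s = g' s) : HNp N p J b g = HNp N p J b g' := by
  have hterm (s : Finset (Fin N)) : (if s.card = p then g s • SzProd N s else 0) =
      if s.card = p then g' s • SzProd N s else 0 :=
    ite_congr rfl (fun hs => by rw [h s hs]) fun _ => rfl
  simp only [HNp, UNp, hterm]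

lemma HNp_submatrix_permConf (p : ℕ) (J b : ℝ) (g : Finset (Fin N) → ℝ)
    (π : Equiv.Perm (Fin N)) :
    (HNp N p J b g).submatrix (permConf π) (permConf π) =
      HNp N p J b fun s => g (s.map π.symm.toEmbedding) := by
  let relabel := reindexLinearEquiv ℝ ℂ (permConf π).symm (permConf π).symm
  have hcoupling : ∑ s : Finset (Fin N), relabel (if s.card = p then g s • SzProd N s else 0) =
      ∑ s : Finset (Fin N),
        if s.card = p then g (s.map π.symm.toEmbedding) • SzProd N s else 0 := by
    refine Fintype.sum_equiv (Equiv.finsetCongr π) _ _ fun s => ?_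
    have hcancel : (s.map π.toEmbedding).map π.symm.toEmbedding = s :=
      (Equiv.finsetCongr π).symm_apply_apply s
    rw [Equiv.finsetCongr_apply, Finset.card_map, hcancel, apply_ite relabel, map_smul, map_zero,
      ← SzProd_submatrix_permConf]
    rfl
  have hfield : ∑ j, relabel (Sx N j) = ∑ j, Sx N j :=
    Fintype.sum_equiv π _ _ (Sx_submatrix_permConf π)
  change relabel (HNp N p J b g) = _
  simp only [HNp, UNp, map_sub, map_smul, map_sum, hcoupling, hfield]

variable {Ω : Type*} [MeasurableSpace Ω] {μ : Measure Ω} {p : ℕ} {g : Ω → Finset (Fin N) → ℝ}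

lemma siteExchangeable_HNp (J b : ℝ)
    (hg : ∀ π : Equiv.Perm (Fin N), IdentDistrib
      (fun ω (s : {t : Finset (Fin N) // t.card = p}) => g ω (s.1.map π.toEmbedding))
      (fun ω s => g ω s.1) μ μ) :
    SiteExchangeable μ fun ω => HNp N p J b (g ω) := by
  intro π
  let extendZero (h : {t : Finset (Fin N) // t.card = p} → ℝ) (s : Finset (Fin N)) : ℝ :=
    if hs : s.card = p then h ⟨s, hs⟩ else 0
  have hcont : Continuous extendZero := by
    refine continuous_pi fun s => ?_
    by_cases hs : s.card = p <;> simp only [extendZero, hs, dite_true, dite_false] <;> fun_prop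
  have hmeas : Measurable fun h σ τ => HNp N p J b (extendZero h) σ τ :=
    measurable_pi_lambda _ fun σ => measurable_pi_lambda _ fun τ =>
      (((continuous_HNp p J b).comp hcont).matrix_elem σ τ).measurable
  have hextend (g' : Finset (Fin N) → ℝ) :
      HNp N p J b g' = HNp N p J b (extendZero fun s => g' s.1) :=
    HNp_congr J b fun s hs => by simp only [extendZero, hs, dite_true]
  have hrelabel (ω : Ω) (σ τ : Conf N) : HNp N p J b (g ω) (permConf π σ) (permConf π τ) =
      HNp N p J b (extendZero fun s => g ω (s.1.map π.symm.toEmbedding)) σ τ := by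
    rw [← hextend fun s => g ω (s.map π.symm.toEmbedding), ← HNp_submatrix_permConf,
      submatrix_apply]
  simp only [hrelabel, hextend (g _)]
  exact (hg π.symm).comp hmeas

lemma siteExchangeable_HNp_of_iIndepFun (J b : ℝ)
    (hindep : iIndepFun (fun (s : {t : Finset (Fin N) // t.card = p}) ω => g ω s.1) μ)
    (hident : ∀ s t : {t : Finset (Fin N) // t.card = p},
      IdentDistrib (fun ω => g ω s.1) (fun ω => g ω t.1) μ μ) :
    SiteExchangeable μ fun ω => HNp N p J b (g ω) := by
  refine siteExchangeable_HNp J b fun π => ?_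
  let relabel (s : {t : Finset (Fin N) // t.card = p}) : {t : Finset (Fin N) // t.card = p} :=
    ⟨s.1.map π.toEmbedding, (s.1.card_map _).trans s.2⟩
  have hinj : Function.Injective relabel := fun s t hst =>
    Subtype.ext (Finset.map_injective π.toEmbedding (congrArg Subtype.val hst))
  exact IdentDistrib.pi (fun s => hident (relabel s) s) (hindep.precomp hinj) hindep

end PSpin

theorem stmt17_general {Ω : Type*} [MeasurableSpace Ω] (μ : Measure Ω) [IsProbabilityMeasure μ]
    {p N : ℕ} (hN : p ≤ N) (β : ℝ) {H : Ω → Matrix (Conf N) (Conf N) ℂ}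
    (hH : ∀ ω, (H ω).IsHermitian) (hexch : SiteExchangeable μ H) :
    0 ≤ (∫ ω, gibbs β (H ω ⊗ₖ (1 : Matrix (Conf N) (Conf N) ℂ) +
            (1 : Matrix (Conf N) (Conf N) ℂ) ⊗ₖ H ω) (RN N ^ p) ∂μ)
          - alphaP N p * ∫ ω, (gibbs β (H ω) (SzProd N (firstP N p))) ^ 2 ∂μ ∧
    (∫ ω, gibbs β (H ω ⊗ₖ (1 : Matrix (Conf N) (Conf N) ℂ) +
            (1 : Matrix (Conf N) (Conf N) ℂ) ⊗ₖ H ω) (RN N ^ p) ∂μ)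
          - alphaP N p * ∫ ω, (gibbs β (H ω) (SzProd N (firstP N p))) ^ 2 ∂μ
      ≤ 1 - alphaP N p := by
  rw [firstP_eq_map_castLEEmb hN, SzProd_map, alphaP_eq_dens_injective hN]
  simp only [fun ω => gibbs_RN_pow β (hH ω) p]
  rw [integral_expect (hexch.integrable_sq_gibbs_spinMonomial β hH)]
  refine expect_sub_dens_mul_mem_Icc (fun f hf => ?_)
    (hexch.integral_sq_gibbs_spinMonomial_mem_Icc β hH)
  have hf_inj : Function.Injective f := (Finset.mem_filter.1 hf).2
  exact (hexch.identDistrib_gibbs_spinMonomial β hf_inj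
    (Fin.castLEEmb hN).injective).sq.integral_eq

theorem stmt17
    {Ω : Type*} [MeasurableSpace Ω] (μ : Measure Ω) [IsProbabilityMeasure μ]
    (p N : ℕ) (hp : 2 ≤ p) (hN : p ≤ N)
    (β J b : ℝ) (hβ : 0 < β) (hJ : 0 < J) (hb : 0 ≤ b)
    (g : Ω → Finset (Fin N) → ℝ)
    (hmeas : ∀ s : Finset (Fin N), Measurable fun ω => g ω s)
    (hgauss : ∀ s : Finset (Fin N), s.card = p →
      Measure.map (fun ω => g ω s) μ = gaussianReal 0 1)
    (hindep : iIndepFun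
      (fun (s : {t : Finset (Fin N) // t.card = p}) ω => g ω s.1) μ) :
    0 ≤ (∫ ω, gibbs β (Hdup N p J b (g ω)) (RN N ^ p) ∂μ)
          - alphaP N p * ∫ ω, (gibbs β (HNp N p J b (g ω)) (SzProd N (firstP N p))) ^ 2 ∂μ ∧
    (∫ ω, gibbs β (Hdup N p J b (g ω)) (RN N ^ p) ∂μ)
          - alphaP N p * ∫ ω, (gibbs β (HNp N p J b (g ω)) (SzProd N (firstP N p))) ^ 2 ∂μ
      ≤ 1 - alphaP N p :=
  stmt17_general μ hN β (fun ω => HNp_isHermitian p J b (g ω))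
    (siteExchangeable_HNp_of_iIndepFun J b hindep fun s t =>
      ⟨(hmeas s).aemeasurable, (hmeas t).aemeasurable, (hgauss s s.2).trans (hgauss t t.2).symm⟩)
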